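/- arXiv:1505.04602 — 3 statements merged into one kernel-verified Lean document; each statement's English description precedes it below -/
import Mathlib

section
/- Let n ≥ 3 and let G be a simple graph on Fin n. Then G is Hamiltonian (i.e., G contains a cycle passing through every vertex) if and only if there exists a subset S of the edge set of G with |S| = n such that {χ(e) : e ∈ S} is reduced and ∑_{e ∈ S} χ(e) = 0. -/
/-- The coding vector of an unordered pair of vertices of `Fin n`:
for `e = {i,j}` with `i < j`, coordinate `k` is `1` iff `i ≤ k < j`. -/
def chi (n : ℕ) : Sym2 (Fin n) → (Fin (n - 1) → ZMod 2) :=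
  Sym2.lift ⟨fun i j k => if min i.val j.val ≤ k.val ∧ k.val < max i.val j.val then 1 else 0,
    fun i j => by funext k; dsimp only; rw [min_comm, max_comm]⟩

/-- `Cseg N` is the set of nonzero vectors of `Fin N → ZMod 2` whose support is an
interval of consecutive indices (the consecutive 1's property). -/
def Cseg (N : ℕ) : Set (Fin N → ZMod 2) :=
  {v | v ≠ 0 ∧ ∃ a b : ℕ, ∀ k : Fin N, v k = 1 ↔ a ≤ k.val ∧ k.val < b}

/-- A finite set of vectors is reduced if it is nonempty and every nonempty proper
subset has nonzero sum. -/
def IsReducedSet {N : ℕ} (S : Finset (Fin N → ZMod 2)) : Prop :=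
  S.Nonempty ∧ ∀ A : Finset (Fin N → ZMod 2), A ⊂ S → A.Nonempty → ∑ v ∈ A, v ≠ 0

theorem chi_mk (n : ℕ) (i j : Fin n) (k : Fin (n - 1)) :
    chi n s(i, j) k = if min i.val j.val ≤ k.val ∧ k.val < max i.val j.val then 1 else 0 := rfl

/-- Incidence is a linear function of the coding vector. -/
def incL (n : ℕ) (u : Fin n) (x : Fin (n - 1) → ZMod 2) : ZMod 2 :=
  (if h : u.val < n - 1 then x ⟨u.val, h⟩ else 0) +
  (if h : 0 < u.val then x ⟨u.val - 1, by omega⟩ else 0)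

theorem incL_chi (n : ℕ) (u : Fin n) (e : Sym2 (Fin n)) (he : ¬ e.IsDiag) :
    incL n u (chi n e) = if u ∈ e then 1 else 0 := by
  induction e using Sym2.ind with
  | _ i j =>
    have hij : i.val ≠ j.val := by simpa [Fin.ext_iff] using he
    have hz : (1 : ZMod 2) + 1 = 0 := by decide
    have hi := i.isLt
    have hj := j.isLt
    have hu := u.isLt
    simp only [incL, chi_mk, Sym2.mem_iff, Fin.ext_iff]
    rcases lt_or_gt_of_ne hij with h | h
    · rw [min_eq_left h.le, max_eq_right h.le]
      split_ifs <;> first | omega | simp [hz]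
    · rw [min_eq_right h.le, max_eq_left h.le]
      split_ifs <;> first | omega | simp [hz]

theorem incL_sum (n : ℕ) (u : Fin n) (B : Finset (Sym2 (Fin n))) :
    incL n u (∑ e ∈ B, chi n e) = ∑ e ∈ B, incL n u (chi n e) := by
  unfold incL
  rw [Finset.sum_add_distrib]
  split_ifs <;> simp

theorem chi_inj (n : ℕ) (e f : Sym2 (Fin n)) (he : ¬ e.IsDiag) (hf : ¬ f.IsDiag)
    (h : chi n e = chi n f) : e = f := by
  refine Sym2.ext fun u => ?_
  have h1 := incL_chi n u e he
  have h2 := incL_chi n u f hf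
  rw [h, h2] at h1
  by_cases a : u ∈ e <;> by_cases b : u ∈ f <;> simp_all

/-- The potential. -/
def pot (n : ℕ) (i : Fin n) : Fin (n - 1) → ZMod 2 := fun k => if k.val < i.val then 1 else 0

theorem chi_pot (n : ℕ) (i j : Fin n) : chi n s(i, j) = pot n i + pot n j := by
  funext k
  have hz : (1 : ZMod 2) + 1 = 0 := by decide
  simp only [chi_mk, Pi.add_apply, pot]
  rcases le_total i.val j.val with h | h
  · rw [min_eq_left h, max_eq_right h]
    split_ifs <;> first | omega | simp [hz]
  · rw [min_eq_right h, max_eq_left h]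
    split_ifs <;> first | omega | simp [hz]

theorem pot_self (n : ℕ) (i : Fin n) : pot n i + pot n i = 0 := by
  funext k
  exact CharTwo.add_self_eq_zero _

theorem walk_sum {n : ℕ} {G : SimpleGraph (Fin n)} {u v : Fin n} (w : G.Walk u v) :
    (w.edges.map (chi n)).sum = pot n u + pot n v := by
  induction w with
  | nil => simp [pot_self]
  | @cons a b c h p ih =>
    rw [SimpleGraph.Walk.edges_cons, List.map_cons, List.sum_cons, ih, chi_pot,
      show pot n a + pot n b + (pot n b + pot n c) = pot n a + (pot n b + pot n b) + pot n c by abel,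
      pot_self, add_zero]

theorem trail_sum {n : ℕ} {G : SimpleGraph (Fin n)} {u : Fin n} (w : G.Walk u u)
    (hw : w.IsTrail) : ∑ e ∈ w.edges.toFinset, chi n e = 0 := by
  rw [List.sum_toFinset _ hw.edges_nodup, walk_sum, pot_self]

theorem path_indep {n : ℕ} {G : SimpleGraph (Fin n)} {u v : Fin n} (w : G.Walk u v)
    (hw : w.IsPath) (B : Finset (Sym2 (Fin n))) (hB : ∀ e ∈ B, e ∈ w.edges)
    (h0 : ∑ e ∈ B, chi n e = 0) : B = ∅ := by
  induction w with
  | nil => exact Finset.eq_empty_of_forall_notMem fun e he => by simpa using hB e he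
  | @cons a b c h p ih =>
    rw [SimpleGraph.Walk.cons_isPath_iff] at hw
    have hnot : s(a, b) ∉ B := by
      intro hmem
      have h1 := incL_sum n a B
      rw [h0] at h1
      have h2 : incL n a 0 = 0 := by simp [incL]
      rw [h2, Finset.sum_eq_single s(a, b), incL_chi] at h1
      · simp at h1
      · simpa using h.ne
      · intro e he hne
        have hee := hB e he
        rw [SimpleGraph.Walk.edges_cons, List.mem_cons] at hee
        have hep := hee.resolve_left hne
        rw [incL_chi _ _ _ (G.not_isDiag_of_mem_edgeSet (p.edges_subset_edgeSet hep)), if_neg]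
        intro hae
        exact hw.2 (SimpleGraph.Walk.mem_support_of_mem_edges hep hae)
      · exact fun h => absurd hmem h
    refine ih hw.1 fun e he => ?_
    have hee := hB e he
    rw [SimpleGraph.Walk.edges_cons, List.mem_cons] at hee
    exact hee.resolve_left fun h => hnot (h ▸ he)

theorem cycle_indep {n : ℕ} {G : SimpleGraph (Fin n)} {u : Fin n} (w : G.Walk u u)
    (hw : w.IsCycle) (B : Finset (Sym2 (Fin n))) (hB : B ⊆ w.edges.toFinset)
    (h0 : ∑ e ∈ B, chi n e = 0) : B = ∅ ∨ B = w.edges.toFinset := by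
  have hS := trail_sum w hw.isTrail
  cases w with
  | nil => exact absurd rfl hw.ne_nil
  | @cons _ b _ h p =>
    have hp := (SimpleGraph.Walk.cons_isCycle_iff p h).1 hw
    by_cases hm : s(u, b) ∈ B
    · right
      have hd : ∑ e ∈ (SimpleGraph.Walk.cons h p).edges.toFinset \ B, chi n e = 0 := by
        have := Finset.sum_sdiff (f := chi n) hB
        rwa [h0, hS, add_zero] at this
      have := path_indep p hp.1 _ (fun e he => ?_) hd
      · exact Finset.Subset.antisymm hB (Finset.sdiff_eq_empty_iff_subset.1 this)
      · rw [Finset.mem_sdiff, List.mem_toFinset, SimpleGraph.Walk.edges_cons, List.mem_cons] at he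
        exact he.1.resolve_left fun h => he.2 (h ▸ hm)
    · left
      refine path_indep p hp.1 B (fun e he => ?_) h0
      have hee := hB he
      rw [List.mem_toFinset, SimpleGraph.Walk.edges_cons, List.mem_cons] at hee
      exact hee.resolve_left fun h => hm (h ▸ he)

theorem stmt2 (n : ℕ) (hn : 3 ≤ n) (G : SimpleGraph (Fin n)) :
    (∃ (v : Fin n) (w : G.Walk v v), w.IsHamiltonianCycle) ↔
      ∃ S : Finset (Sym2 (Fin n)), ↑S ⊆ G.edgeSet ∧ S.card = n ∧
        IsReducedSet (S.image (chi n)) ∧ ∑ e ∈ S, chi n e = 0 := by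
  classical
  constructor
  · rintro ⟨v, w, hw⟩
    have hc := hw.isCycle
    have hsub : ∀ e ∈ w.edges.toFinset, e ∈ G.edgeSet := fun e he =>
      w.edges_subset_edgeSet (List.mem_toFinset.1 he)
    have hcard : w.edges.toFinset.card = n := by
      rw [List.toFinset_card_of_nodup hc.isTrail.edges_nodup, SimpleGraph.Walk.length_edges,
        hw.length_eq, Fintype.card_fin]
    refine ⟨w.edges.toFinset, fun e he => hsub e he, hcard, ⟨?_, ?_⟩, trail_sum w hc.isTrail⟩
    · rw [Finset.image_nonempty, ← Finset.card_pos]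
      omega
    · intro A hA hne h0
      obtain ⟨B, hB, rfl⟩ := Finset.subset_image_iff.1 hA.subset
      have hB' : B ⊆ w.edges.toFinset := by exact_mod_cast hB
      rw [Finset.sum_image] at h0
      · rcases cycle_indep w hc B hB' h0 with h | h
        · simp [h] at hne
        · rw [h] at hA
          exact hA.ne rfl
      · intro e he f hf
        exact chi_inj n e f (G.not_isDiag_of_mem_edgeSet (hsub e (hB' he)))
          (G.not_isDiag_of_mem_edgeSet (hsub f (hB' hf)))
  · rintro ⟨S, hSG, hcard, hred, -⟩
    have hdiag : ∀ e ∈ S, ¬ e.IsDiag := fun e he => G.not_isDiag_of_mem_edgeSet (hSG he)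
    let H := SimpleGraph.fromEdgeSet (S : Set (Sym2 (Fin n)))
    have hHe : ∀ e, e ∈ H.edgeSet ↔ e ∈ S := by
      intro e
      simp only [H, SimpleGraph.edgeSet_fromEdgeSet, Set.mem_sdiff, Finset.mem_coe]
      exact ⟨fun h => h.1, fun h => ⟨h, hdiag e h⟩⟩
    have hHG : H ≤ G := by
      rw [← SimpleGraph.edgeSet_subset_edgeSet]
      exact fun e he => hSG ((hHe e).1 he)
    haveI : Nonempty (Fin n) := ⟨⟨0, by omega⟩⟩
    have hcyc : ¬ H.IsAcyclic := by
      intro hac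
      obtain ⟨T, hT, -, hTt⟩ :=
        SimpleGraph.connected_top.exists_isTree_le_of_le_of_isAcyclic (le_top : H ≤ ⊤) hac
      have h1 := hTt.card_edgeFinset
      rw [Fintype.card_fin] at h1
      have h2 : S ⊆ T.edgeFinset := fun e he => by
        rw [SimpleGraph.mem_edgeFinset]
        exact SimpleGraph.edgeSet_subset_edgeSet.2 hT ((hHe e).2 he)
      have := Finset.card_le_card h2
      omega
    simp only [SimpleGraph.IsAcyclic, not_forall, not_not] at hcyc
    obtain ⟨v, c, hc⟩ := hcyc
    have hcS : c.edges.toFinset ⊆ S := fun e he =>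
      (hHe e).1 (c.edges_subset_edgeSet (List.mem_toFinset.1 he))
    have hinj : Set.InjOn (chi n) S := fun e he f hf h =>
      chi_inj n e f (hdiag e he) (hdiag f hf) h
    have hlen : c.edges.toFinset.card = c.length := by
      rw [List.toFinset_card_of_nodup hc.isTrail.edges_nodup, SimpleGraph.Walk.length_edges]
    have h3 := hc.three_le_length
    have heq : c.edges.toFinset = S := by
      by_contra hne
      have hss : c.edges.toFinset ⊂ S := lt_of_le_of_ne hcS hne
      refine hred.2 (c.edges.toFinset.image (chi n)) ?_ ?_ ?_
      · refine lt_of_le_of_ne (Finset.image_subset_image hcS) fun h => ?_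
        have h4 := Finset.card_lt_card hss
        have h5 := congrArg Finset.card h
        rw [Finset.card_image_of_injOn hinj,
          Finset.card_image_of_injOn (hinj.mono (by exact_mod_cast hcS))] at h5
        omega
      · rw [Finset.image_nonempty, ← Finset.card_pos]
        omega
      · rw [Finset.sum_image (hinj.mono (by exact_mod_cast hcS))]
        exact trail_sum c hc.isTrail
    refine ⟨v, c.mapLe hHG, ?_⟩
    rw [SimpleGraph.Walk.isHamiltonianCycle_iff_isCycle_and_length_eq]
    refine ⟨hc.mapLe hHG, ?_⟩
    rw [SimpleGraph.Walk.length_mapLe, ← hlen, heq, hcard, Fintype.card_fin]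
end

section
/- Let n ≥ 2 and let G be a simple graph on Fin n. Then G is connected if and only if the linear span over ZMod 2 of the coding sequence β(G) = {χ(e) : e ∈ E(G)} is all of (Fin (n-1) → ZMod 2). -/
/-- prefix vector -/
def pvec (n i : ℕ) : Fin (n - 1) → ZMod 2 := fun k => if k.val < i then 1 else 0

lemma chi_mk_eq (n : ℕ) (i j : Fin n) : chi n s(i, j) = pvec n i.val + pvec n j.val := by
  funext k
  have h11 : (1 : ZMod 2) + 1 = 0 := by decide
  simp only [chi, Sym2.lift_mk, pvec, Pi.add_apply]
  by_cases h1 : k.val < i.val <;> by_cases h2 : k.val < j.val <;>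
    simp [h1, h2, h11] <;> omega

lemma pvec_succ (n i : ℕ) (hi : i < n - 1) :
    pvec n (i + 1) = pvec n i + Pi.single ⟨i, hi⟩ 1 := by
  funext k
  by_cases h : k = ⟨i, hi⟩
  · subst h; simp [pvec]
  · have h2 : k.val ≠ i := fun h' => h (Fin.ext h')
    have : k.val < i + 1 ↔ k.val < i := by omega
    simp [pvec, this, Pi.single_eq_of_ne h]

lemma zmod2_self {M : Type*} [AddCommGroup M] [Module (ZMod 2) M] (x : M) : x + x = 0 := by
  rw [← two_smul (ZMod 2) x, show (2 : ZMod 2) = 0 from rfl, zero_smul]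

lemma span_of_connected (n : ℕ) (G : SimpleGraph (Fin n)) (hG : G.Connected) :
    Submodule.span (ZMod 2) (chi n '' G.edgeSet) = ⊤ := by
  have key : ∀ u v : Fin n, G.Walk u v →
      pvec n u.val + pvec n v.val ∈ Submodule.span (ZMod 2) (chi n '' G.edgeSet) := by
    intro u v w
    induction w with
    | nil => rw [zmod2_self]; exact Submodule.zero_mem _
    | @cons a b c h w ih =>
      have h1 : chi n s(a, b) ∈ Submodule.span (ZMod 2) (chi n '' G.edgeSet) :=
        Submodule.subset_span ⟨_, h, rfl⟩
      rw [chi_mk_eq] at h1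
      have h2 := Submodule.add_mem _ h1 ih
      have h3 : pvec n a.val + pvec n b.val + (pvec n b.val + pvec n c.val)
          = pvec n a.val + pvec n c.val + (pvec n b.val + pvec n b.val) := by abel
      rwa [h3, zmod2_self, add_zero] at h2
  rw [eq_top_iff, ← (Pi.basisFun (ZMod 2) (Fin (n - 1))).span_eq, Submodule.span_le]
  rintro _ ⟨k, rfl⟩
  have hk := k.isLt
  obtain ⟨w⟩ := hG.preconnected ⟨k.val, by omega⟩ ⟨k.val + 1, by omega⟩
  have h := key _ _ w
  simp only at h
  rw [pvec_succ n k.val hk, ← add_assoc, zmod2_self, zero_add] at h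
  simpa using h

lemma connected_of_span (n : ℕ) (hn : 2 ≤ n) (G : SimpleGraph (Fin n))
    (hs : Submodule.span (ZMod 2) (chi n '' G.edgeSet) = ⊤) : G.Connected := by
  classical
  have : Nonempty (Fin n) := ⟨⟨0, by omega⟩⟩
  refine ⟨?_⟩
  let z : Fin n := ⟨0, by omega⟩
  let c : ℕ → ZMod 2 := fun i => if ∃ h : i < n, G.Reachable z ⟨i, h⟩ then 1 else 0
  let f : (Fin (n - 1) → ZMod 2) →ₗ[ZMod 2] ZMod 2 :=
    Fintype.linearCombination (ZMod 2) (fun k : Fin (n - 1) => c k.val + c (k.val + 1))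
  have fs : ∀ k : Fin (n - 1), f (Pi.single k 1) = c k.val + c (k.val + 1) := by
    intro k
    simp [f, Fintype.linearCombination_apply_single]
  have fp : ∀ i, i ≤ n - 1 → f (pvec n i) = c 0 + c i := by
    intro i
    induction i with
    | zero =>
      intro _
      have : pvec n 0 = 0 := by funext k; simp [pvec]
      rw [this, map_zero, zmod2_self]
    | succ i ih =>
      intro hi
      rw [pvec_succ n i (by omega), map_add, ih (by omega), fs]
      have : c 0 + c i + (c i + c (i + 1)) = c 0 + c (i + 1) + (c i + c i) := by abel
      simp only [this, zmod2_self, add_zero]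
  have f0 : f = 0 := by
    apply LinearMap.ext_on hs
    rintro _ ⟨e, he, rfl⟩
    induction e using Sym2.ind with
    | _ a b =>
      have hab : G.Adj a b := he
      have hc : c a.val = c b.val := by
        have : G.Reachable z a ↔ G.Reachable z b :=
          ⟨fun h => h.trans hab.reachable, fun h => h.trans hab.symm.reachable⟩
        simp [c, this]
      rw [chi_mk_eq, map_add, fp _ (by omega), fp _ (by omega), hc, zmod2_self]
      rfl
  have hr : ∀ i (h : i < n), G.Reachable z ⟨i, h⟩ := by
    intro i h
    have h1 := fp i (by omega)
    rw [f0] at h1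
    have c0 : c 0 = 1 := by
      have : ∃ h : 0 < n, G.Reachable z ⟨0, h⟩ := ⟨by omega, SimpleGraph.Reachable.refl _⟩
      simp only [c, if_pos this]
    rw [c0] at h1
    by_contra hc
    have : c i = 0 := by
      have : ¬ ∃ h : i < n, G.Reachable z ⟨i, h⟩ := fun ⟨_, h'⟩ => hc h'
      simp only [c, if_neg this]
    rw [this] at h1
    simp at h1
  intro u v
  exact (hr u.val u.isLt).symm.trans (hr v.val v.isLt)

theorem stmt7 (n : ℕ) (hn : 2 ≤ n) (G : SimpleGraph (Fin n)) :
    G.Connected ↔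
      Submodule.span (ZMod 2) (chi n '' G.edgeSet) = ⊤ := by
  exact ⟨span_of_connected n G, connected_of_span n hn G⟩
end

section
/- Let n ≥ 2 and let S be a finite subset of C(n-1). Then there exist a simple graph G on Fin n and a bijection ψ from S onto the edge set of G such that for every subset X of S, X is linearly independent over ZMod 2 if and only if the spanning subgraph of G with edge set ψ(X) is acyclic. (Every simple segment binary matroid is simple graphic.) -/
/-- Prefix indicator vectors. -/
def prefVec (n : ℕ) (i : Fin n) : Fin (n - 1) → ZMod 2 := fun k => if k.val < i.val then 1 else 0

lemma zmod2_add_self (x : ZMod 2) : x + x = 0 := by revert x; decide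

lemma vec_add_self {ι : Type*} (x : ι → ZMod 2) : x + x = 0 := by
  funext k; exact zmod2_add_self _

lemma chi_mk_s12 (n : ℕ) (i j : Fin n) : chi n s(i, j) = prefVec n i + prefVec n j := by
  funext k
  simp only [chi, Sym2.lift_mk, prefVec, Pi.add_apply]
  have h2 : (1 : ZMod 2) + 1 = 0 := by decide
  split_ifs <;> first | omega | simp [h2]

lemma tele (f : ℕ → ZMod 2) (N i : ℕ) (hi : i ≤ N) :
    ∑ k ∈ Finset.range N, (if k < i then 1 else 0) * (f k + f (k + 1)) = f i + f 0 := by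
  simp only [ite_mul, one_mul, zero_mul]
  rw [← Finset.sum_filter]
  have : (Finset.range N).filter (fun k => k < i) = Finset.range i := by
    ext k; simp; omega
  rw [this]
  clear this hi
  induction i with
  | zero => simp [zmod2_add_self]
  | succ i ih =>
    rw [Finset.sum_range_succ, ih]
    linear_combination zmod2_add_self (f i)

lemma exists_functional (n : ℕ) (c : Fin n → ZMod 2) :
    ∃ φ : (Fin (n - 1) → ZMod 2) →ₗ[ZMod 2] ZMod 2,
      ∀ i j, φ (chi n s(i, j)) = c i + c j := by
  let f : ℕ → ZMod 2 := fun k => if h : k < n then c ⟨k, h⟩ else 0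
  refine ⟨∑ k : Fin (n - 1), (f k + f (k + 1)) • LinearMap.proj k, ?_⟩
  have key : ∀ i : Fin n, (∑ k : Fin (n - 1), (f k + f (k + 1)) •
      (LinearMap.proj k : (Fin (n - 1) → ZMod 2) →ₗ[ZMod 2] ZMod 2)) (prefVec n i)
      = c i + f 0 := by
    intro i
    have := tele f (n - 1) i (by omega)
    rw [← Fin.sum_univ_eq_sum_range
      (fun k => (if k < i.val then (1 : ZMod 2) else 0) * (f k + f (k + 1)))] at this
    have hfi : f i = c i := by simp [f]
    rw [hfi] at this
    rw [← this]
    simp [LinearMap.sum_apply, prefVec]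
  intro i j
  rw [chi_mk_s12, map_add, key, key]
  linear_combination zmod2_add_self (f 0)

lemma chi_surj (n : ℕ) (v : Fin (n - 1) → ZMod 2) (hv : v ∈ Cseg (n - 1)) :
    ∃ e : Sym2 (Fin n), ¬ e.IsDiag ∧ chi n e = v := by
  obtain ⟨h0, a, b, hab⟩ := hv
  have : ∃ k, v k = 1 := by
    by_contra! h
    apply h0
    funext k
    have : ∀ x : ZMod 2, x ≠ 1 → x = 0 := by decide
    exact this _ (h k)
  obtain ⟨k, hk⟩ := this
  have hk' := (hab k).1 hk
  have hkn := k.2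
  refine ⟨s(⟨a, by omega⟩, ⟨min b (n - 1), by omega⟩), ?_, ?_⟩
  · simp only [Sym2.mk_isDiag_iff, Fin.mk.injEq]
    omega
  · funext l
    have := hab l
    have hl := l.2
    simp only [chi, Sym2.lift_mk]
    have h01 : ∀ x : ZMod 2, x ≠ 1 → x = 0 := by decide
    split_ifs with h
    · exact (this.2 (by omega)).symm
    · exact (h01 _ (fun h' => h (by have := this.1 h'; omega))).symm

lemma reach_span (n : ℕ) (H : SimpleGraph (Fin n)) (W : Submodule (ZMod 2) (Fin (n - 1) → ZMod 2))
    (h : ∀ i j, H.Adj i j → chi n s(i, j) ∈ W) (u v : Fin n) (hr : H.Reachable u v) :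
    chi n s(u, v) ∈ W := by
  obtain ⟨p⟩ := hr
  induction p with
  | nil => rw [chi_mk_s12, vec_add_self]; exact W.zero_mem
  | @cons a b c hab p ih =>
    have := W.add_mem (h _ _ hab) ih
    rw [chi_mk_s12, chi_mk_s12] at this
    rw [chi_mk_s12]
    convert this using 1
    linear_combination -(vec_add_self (prefVec n b))

lemma unreach_span (n : ℕ) (H : SimpleGraph (Fin n)) (T : Set (Fin (n - 1) → ZMod 2))
    (h : ∀ w ∈ T, ∃ i j, H.Adj i j ∧ chi n s(i, j) = w) (u v : Fin n) (hr : ¬ H.Reachable u v) :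
    chi n s(u, v) ∉ Submodule.span (ZMod 2) T := by
  classical
  obtain ⟨φ, hφ⟩ := exists_functional n (fun i => if H.Reachable u i then 1 else 0)
  intro hm
  have hle : Submodule.span (ZMod 2) T ≤ LinearMap.ker φ := by
    rw [Submodule.span_le]
    intro w hw
    obtain ⟨i, j, hij, rfl⟩ := h w hw
    have : H.Reachable u i ↔ H.Reachable u j :=
      ⟨fun h => h.trans hij.reachable, fun h => h.trans hij.symm.reachable⟩
    simp only [SetLike.mem_coe, LinearMap.mem_ker, hφ, this]
    exact zmod2_add_self _
  have := hle hm
  rw [LinearMap.mem_ker, hφ] at this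
  simp [hr] at this

theorem stmt12 (n : ℕ) (hn : 2 ≤ n) (S : Finset (Fin (n - 1) → ZMod 2))
    (hS : ↑S ⊆ Cseg (n - 1)) :
    ∃ (G : SimpleGraph (Fin n)) (ψ : (Fin (n - 1) → ZMod 2) → Sym2 (Fin n)),
      Set.BijOn ψ ↑S G.edgeSet ∧
        ∀ X : Set (Fin (n - 1) → ZMod 2), X ⊆ ↑S →
          (LinearIndependent (ZMod 2) ((↑) : X → (Fin (n - 1) → ZMod 2)) ↔
            (SimpleGraph.fromEdgeSet (ψ '' X)).IsAcyclic) := by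
  classical
  have hex : ∀ v : Fin (n - 1) → ZMod 2, ∃ e : Sym2 (Fin n), v ∈ Cseg (n - 1) →
      ¬ e.IsDiag ∧ chi n e = v := by
    intro v
    by_cases hv : v ∈ Cseg (n - 1)
    · obtain ⟨e, he⟩ := chi_surj n v hv
      exact ⟨e, fun _ => he⟩
    · exact ⟨s(⟨0, by omega⟩, ⟨0, by omega⟩), fun h => absurd h hv⟩
  choose ψ hψ using hex
  have hd : ∀ v ∈ S, ¬ (ψ v).IsDiag := fun v hv => (hψ v (hS hv)).1
  have hc : ∀ v ∈ S, chi n (ψ v) = v := fun v hv => (hψ v (hS hv)).2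
  have hes : ∀ X : Set (Fin (n - 1) → ZMod 2), X ⊆ ↑S →
      (SimpleGraph.fromEdgeSet (ψ '' X)).edgeSet = ψ '' X := by
    intro X hX
    rw [SimpleGraph.edgeSet_fromEdgeSet]
    ext e
    constructor
    · exact fun h => h.1
    · rintro ⟨v, hv, rfl⟩
      exact ⟨⟨v, hv, rfl⟩, fun h => hd v (hX hv) (by simpa using h)⟩
  have hinj : Set.InjOn ψ ↑S := by
    intro v hv w hw h
    rw [← hc v hv, ← hc w hw, h]
  refine ⟨SimpleGraph.fromEdgeSet (ψ '' ↑S), ψ, ?_, ?_⟩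
  · rw [hes _ subset_rfl]
    exact hinj.bijOn_image
  · intro X hX
    have hlin : LinearIndependent (ZMod 2) ((↑) : X → (Fin (n - 1) → ZMod 2)) ↔
        ∀ v ∈ X, v ∉ Submodule.span (ZMod 2) (X \ {v}) := by
      have := linearIndepOn_iff_notMem_span (K := ZMod 2)
        (v := (id : (Fin (n - 1) → ZMod 2) → _)) (s := X)
      simpa [LinearIndepOn] using this
    rw [hlin, SimpleGraph.isAcyclic_iff_forall_isBridge, hes X hX, Set.forall_mem_image]
    refine forall₂_congr fun v hv => ?_
    have hcv := hc v (hX hv)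
    generalize he : ψ v = e at hcv
    induction e using Sym2.ind with
    | _ a b =>
    rw [SimpleGraph.isBridge_iff]
    constructor
    · intro h hr
      apply h
      rw [← hcv]
      refine reach_span n _ _ ?_ a b hr
      intro i j hij
      rw [SimpleGraph.deleteEdges_adj, SimpleGraph.fromEdgeSet_adj] at hij
      obtain ⟨⟨⟨w, hw, hwe⟩, _⟩, hne⟩ := hij
      apply Submodule.subset_span
      rw [← hwe, hc w (hX hw)]
      refine ⟨hw, fun hwv => hne ?_⟩
      rw [Set.mem_singleton_iff] at hwv ⊢
      rw [← hwe, ← he, hwv, hcv]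
    · intro hr
      rw [← hcv]
      refine unreach_span n _ _ ?_ a b hr
      rintro w ⟨hw, hne⟩
      have hcw := hc w (hX hw)
      have hdw := hd w (hX hw)
      generalize hew : ψ w = e at hcw hdw
      induction e using Sym2.ind with
      | _ i j =>
      refine ⟨i, j, ?_, hcw⟩
      rw [SimpleGraph.deleteEdges_adj, SimpleGraph.fromEdgeSet_adj]
      refine ⟨⟨⟨w, hw, hew⟩, by simpa using hdw⟩, fun h => hne ?_⟩
      rw [Set.mem_singleton_iff] at h ⊢
      rw [← hcw, h]
end
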